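/- For any two n-outcome POVMs E₁ and E₂ on ℂ^d (d ≥ 1), one has B(E₁,E₂) = 1 if and only if E₁ = E₂ (i.e., E₁(i) = E₂(i) for every outcome i). -/

import Mathlib

open scoped BigOperators Kronecker ComplexOrder Matrix

noncomputable section

/-- The positive semidefinite square root of a positive semidefinite matrix
(the definition of the older Mathlib, since removed). -/
noncomputable def Matrix.PosSemidef.sqrt {n 𝕜 : Type*} [Fintype n] [RCLike 𝕜] [DecidableEq n]
    {A : Matrix n n 𝕜} (hA : A.PosSemidef) : Matrix n n 𝕜 :=
  hA.1.eigenvectorUnitary.1 * Matrix.diagonal ((↑) ∘ Real.sqrt ∘ hA.1.eigenvalues) *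
    (star hA.1.eigenvectorUnitary : Matrix n n 𝕜)

namespace QProg

/-- The positive-semidefinite square root of a matrix, extended by `0` to all matrices. -/
noncomputable def matSqrt {α : Type*} [Fintype α] [DecidableEq α]
    (A : Matrix α α ℂ) : Matrix α α ℂ :=
  @dite _ A.PosSemidef (Classical.propDecidable _) (fun h => h.sqrt) (fun _ => 0)

/-- The fidelity `F(ρ,σ) = Tr √(√ρ σ √ρ)` of two (density) matrices. -/
noncomputable def fid {α : Type*} [Fintype α] [DecidableEq α]
    (ρ σ : Matrix α α ℂ) : ℝ :=
  ((matSqrt (matSqrt ρ * σ * matSqrt ρ)).trace).re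

/-- A density matrix: positive semidefinite with unit trace. -/
def IsDensity {α : Type*} [Fintype α] [DecidableEq α] (ρ : Matrix α α ℂ) : Prop :=
  ρ.PosSemidef ∧ ρ.trace = 1

/-- An `n`-outcome POVM: positive semidefinite effects summing to the identity. -/
def IsPOVM {α : Type*} [Fintype α] [DecidableEq α] {n : ℕ}
    (E : Fin n → Matrix α α ℂ) : Prop :=
  (∀ i, (E i).PosSemidef) ∧ ∑ i, E i = 1

/-- The outcome distribution `p^E_ρ(i) = Tr[E(i) ρ]`. -/
noncomputable def outDist {α : Type*} [Fintype α] [DecidableEq α] {n : ℕ}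
    (E : Fin n → Matrix α α ℂ) (ρ : Matrix α α ℂ) (i : Fin n) : ℝ :=
  ((E i * ρ).trace).re

/-- The Bhattacharyya coefficient `B(p,q) = ∑ᵢ √(p i) √(q i)`. -/
noncomputable def bhat {n : ℕ} (p q : Fin n → ℝ) : ℝ :=
  ∑ i, Real.sqrt (p i) * Real.sqrt (q i)

/-- `B(E₁,E₂)`: infimum of `B(p^{E₁}_{ρ₁}, p^{E₂}_{ρ₂}) / F(ρ₁,ρ₂)` over pairs of
density matrices with nonvanishing fidelity. -/
noncomputable def obsB {α : Type*} [Fintype α] [DecidableEq α] {n : ℕ}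
    (E₁ E₂ : Fin n → Matrix α α ℂ) : ℝ :=
  sInf { r : ℝ | ∃ ρ₁ ρ₂ : Matrix α α ℂ, IsDensity ρ₁ ∧ IsDensity ρ₂ ∧
    fid ρ₁ ρ₂ ≠ 0 ∧ r = bhat (outDist E₁ ρ₁) (outDist E₂ ρ₂) / fid ρ₁ ρ₂ }

/-- A post-processing from `n` outcomes to `m` outcomes. -/
def IsPostProc {n m : ℕ} (lam : Fin n → Fin m → ℝ) : Prop :=
  (∀ i y, 0 ≤ lam i y) ∧ ∀ i, ∑ y, lam i y = 1

/-- The action `(λ⋆E)(y) = ∑ᵢ λ(i|y) E(i)` of a post-processing on a POVM. -/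
noncomputable def ppStar {α : Type*} [Fintype α] [DecidableEq α] {n m : ℕ}
    (lam : Fin n → Fin m → ℝ) (E : Fin n → Matrix α α ℂ) (y : Fin m) :
    Matrix α α ℂ :=
  ∑ i, (lam i y : ℂ) • E i

/-- The action `(λ⋆p)(y) = ∑ᵢ λ(i|y) p(i)` of a post-processing on a probability vector. -/
noncomputable def ppStarVec {n m : ℕ} (lam : Fin n → Fin m → ℝ) (p : Fin n → ℝ)
    (y : Fin m) : ℝ :=
  ∑ i, lam i y * p i

/-- A probability vector on `{1,…,n}`. -/
def IsProbVec {n : ℕ} (p : Fin n → ℝ) : Prop :=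
  (∀ i, 0 ≤ p i) ∧ ∑ i, p i = 1

/-- `F(λ₁,λ₂)`: infimum of `B(λ₁⋆p, λ₂⋆p)` over probability vectors `p`. -/
noncomputable def ppF {n m : ℕ} (lam₁ lam₂ : Fin n → Fin m → ℝ) : ℝ :=
  sInf { r : ℝ | ∃ p : Fin n → ℝ, IsProbVec p ∧
    r = bhat (ppStarVec lam₁ p) (ppStarVec lam₂ p) }

/-! ### Helper lemmas -/

section helpers

variable {α : Type*} [Fintype α] [DecidableEq α]

lemma conj_mul_conj (V X Y : Matrix α α ℂ) (hV : star V * V = 1) :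
    (V * X * star V) * (V * Y * star V) = V * (X * Y) * star V := by
  calc _ = V * X * (star V * V) * Y * star V := by simp only [Matrix.mul_assoc]
    _ = _ := by rw [hV]; simp only [Matrix.mul_assoc, Matrix.one_mul]

/-- Basic facts about the square root, with a pseudo-inverse `R`. -/
lemma matSqrt_spec {A : Matrix α α ℂ} (hA : A.PosSemidef) :
    (matSqrt A).PosSemidef ∧ matSqrt A * matSqrt A = A ∧
    ∃ R : Matrix α α ℂ, Rᴴ = R ∧ R * matSqrt A * matSqrt A = matSqrt A ∧
      R * matSqrt A = matSqrt A * R ∧ matSqrt A * R * R = R := by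
  have hP : matSqrt A = hA.1.eigenvectorUnitary.1 *
      Matrix.diagonal (fun i => ((Real.sqrt (hA.1.eigenvalues i) : ℝ) : ℂ)) *
      star hA.1.eigenvectorUnitary.1 := by
    unfold matSqrt
    rw [dif_pos hA]
    rfl
  have hspec : A = hA.1.eigenvectorUnitary.1 *
      Matrix.diagonal (fun i => ((hA.1.eigenvalues i : ℝ) : ℂ)) *
      star hA.1.eigenvectorUnitary.1 := hA.1.spectral_theorem
  have hnn : ∀ i, 0 ≤ hA.1.eigenvalues i := hA.eigenvalues_nonneg
  have hV : star hA.1.eigenvectorUnitary.1 * hA.1.eigenvectorUnitary.1 = 1 :=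
    Unitary.coe_star_mul_self _
  generalize hA.1.eigenvectorUnitary.1 = V at *
  generalize hA.1.eigenvalues = l at *
  rw [hP]
  refine ⟨?_, ?_, V * Matrix.diagonal (fun i => (((Real.sqrt (l i))⁻¹ : ℝ) : ℂ)) * star V,
    ?_, ?_, ?_, ?_⟩
  · refine Matrix.PosSemidef.mul_mul_conjTranspose_same (Matrix.PosSemidef.diagonal ?_) V
    intro i
    simp [Real.sqrt_nonneg]
  · rw [conj_mul_conj _ _ _ hV, Matrix.diagonal_mul_diagonal]
    conv_rhs => rw [hspec]
    congr 3
    funext i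
    rw [← Complex.ofReal_mul, Real.mul_self_sqrt (hnn i)]
  · simp only [Matrix.star_eq_conjTranspose, Matrix.conjTranspose_mul,
      Matrix.conjTranspose_conjTranspose, Matrix.diagonal_conjTranspose, Matrix.mul_assoc]
    congr 3
    funext i
    simp
  · simp only [conj_mul_conj _ _ _ hV, Matrix.diagonal_mul_diagonal]
    congr 3
    funext i
    simp only [← Complex.ofReal_mul]
    by_cases h : Real.sqrt (l i) = 0
    · simp [h]
    · congr 1; field_simp
  · simp only [conj_mul_conj _ _ _ hV, Matrix.diagonal_mul_diagonal]
    congr 3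
    funext i
    ring
  · simp only [conj_mul_conj _ _ _ hV, Matrix.diagonal_mul_diagonal]
    congr 3
    funext i
    simp only [← Complex.ofReal_mul]
    by_cases h : Real.sqrt (l i) = 0
    · simp [h]
    · congr 1; field_simp

open scoped MatrixOrder Matrix.Norms.L2Operator in
lemma psd_sq_inj {A B : Matrix α α ℂ} (hA : A.PosSemidef) (hB : B.PosSemidef)
    (h : A * A = B * B) : A = B :=
  (CFC.mul_self_eq_mul_self_iff A B (Matrix.nonneg_iff_posSemidef.2 hA)
    (Matrix.nonneg_iff_posSemidef.2 hB)).1 h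

/-- Cauchy-Schwarz for the Hilbert-Schmidt inner product. -/
lemma trace_cs (A B : Matrix α α ℂ) :
    ((Aᴴ * B).trace).re ≤ Real.sqrt ((Aᴴ * A).trace).re * Real.sqrt ((Bᴴ * B).trace).re := by
  have key : ∀ X Y : Matrix α α ℂ, ((Xᴴ * Y).trace).re
      = ∑ p : α × α, (star (X p.1 p.2) * Y p.1 p.2).re := by
    intro X Y
    rw [Fintype.sum_prod_type, Finset.sum_comm]
    simp [Matrix.trace, Matrix.mul_apply]
  have key2 : ∀ X : Matrix α α ℂ, ((Xᴴ * X).trace).re = ∑ p : α × α, ‖X p.1 p.2‖ ^ 2 := by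
    intro X
    rw [key]
    refine Finset.sum_congr rfl fun p _ => ?_
    rw [Complex.sq_norm, Complex.normSq_apply]
    simp
  rw [key, key2, key2]
  refine le_trans ?_ (Real.sum_mul_le_sqrt_mul_sqrt _ _ _)
  refine Finset.sum_le_sum fun p _ => ?_
  refine (Complex.re_le_norm _).trans ?_
  simp

lemma re_trace_nonneg {A : Matrix α α ℂ} (hA : A.PosSemidef) : 0 ≤ A.trace.re :=
  (Complex.le_def.1 hA.trace_nonneg).1

lemma re_trace_mul_nonneg {A B : Matrix α α ℂ} (hA : A.PosSemidef) (hB : B.PosSemidef) :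
    0 ≤ ((A * B).trace).re := by
  obtain ⟨hS, hSS, -⟩ := matSqrt_spec hB
  rw [← hSS, ← Matrix.mul_assoc, Matrix.trace_mul_comm, ← Matrix.mul_assoc]
  have := hA.mul_mul_conjTranspose_same (matSqrt B)
  rw [hS.1.eq] at this
  exact re_trace_nonneg this

lemma fid_arg_psd {ρ σ : Matrix α α ℂ} (hρ : ρ.PosSemidef) (hσ : σ.PosSemidef) :
    (matSqrt ρ * σ * matSqrt ρ).PosSemidef := by
  have := hσ.mul_mul_conjTranspose_same (matSqrt ρ)
  rwa [(matSqrt_spec hρ).1.1.eq] at this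

lemma fid_nonneg {ρ σ : Matrix α α ℂ} (hρ : ρ.PosSemidef) (hσ : σ.PosSemidef) :
    0 ≤ fid ρ σ :=
  re_trace_nonneg (matSqrt_spec (fid_arg_psd hρ hσ)).1

lemma fid_self {ρ : Matrix α α ℂ} (hρ : IsDensity ρ) : fid ρ ρ = 1 := by
  obtain ⟨hS, hSS, -⟩ := matSqrt_spec hρ.1
  obtain ⟨hP, hPP, -⟩ := matSqrt_spec (fid_arg_psd hρ.1 hρ.1)
  have : matSqrt (matSqrt ρ * ρ * matSqrt ρ) = ρ := by
    refine psd_sq_inj hP hρ.1 ?_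
    rw [hPP]
    calc matSqrt ρ * ρ * matSqrt ρ = matSqrt ρ * (matSqrt ρ * matSqrt ρ) * matSqrt ρ := by rw [hSS]
      _ = (matSqrt ρ * matSqrt ρ) * (matSqrt ρ * matSqrt ρ) := by simp only [Matrix.mul_assoc]
      _ = ρ * ρ := by rw [hSS]
  unfold fid
  rw [this, hρ.2]
  simp

/-- `Tr √(Mᴴ M) = Tr (U M)` for a contraction `U`. -/
lemma polar (M : Matrix α α ℂ) : ∃ U : Matrix α α ℂ,
    U * M = matSqrt (Mᴴ * M) ∧ (1 - Uᴴ * U).PosSemidef := by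
  obtain ⟨hP, hPP, R, hR, h1, h2, h3⟩ :=
    matSqrt_spec (Matrix.posSemidef_conjTranspose_mul_self M)
  set P := matSqrt (Mᴴ * M) with hPdef
  have hUM : (R * Mᴴ) * M = P := by
    rw [Matrix.mul_assoc, ← hPP, ← Matrix.mul_assoc, h1]
  have hUUU : (R * Mᴴ) * ((R * Mᴴ)ᴴ * (R * Mᴴ)) = R * Mᴴ := by
    calc (R * Mᴴ) * ((R * Mᴴ)ᴴ * (R * Mᴴ)) = ((R * Mᴴ) * M) * R * R * Mᴴ := by
          rw [Matrix.conjTranspose_mul, Matrix.conjTranspose_conjTranspose, hR]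
          simp only [Matrix.mul_assoc]
      _ = R * Mᴴ := by rw [hUM, h3]
  refine ⟨R * Mᴴ, hUM, ?_⟩
  generalize R * Mᴴ = U at hUUU
  have hI : 1 - Uᴴ * U = (1 - Uᴴ * U)ᴴ * (1 - Uᴴ * U) := by
    have hh : (1 - Uᴴ * U)ᴴ = 1 - Uᴴ * U := by simp
    rw [hh, Matrix.sub_mul, Matrix.mul_sub, Matrix.mul_sub, Matrix.mul_assoc Uᴴ U (Uᴴ * U), hUUU]
    simp
  rw [hI]
  exact Matrix.posSemidef_conjTranspose_mul_self _

/-- Measurement does not decrease the fidelity. -/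
lemma fid_le_bhat {n : ℕ} {E : Fin n → Matrix α α ℂ} (hE : IsPOVM E) {ρ σ : Matrix α α ℂ}
    (hρ : ρ.PosSemidef) (hσ : σ.PosSemidef) :
    fid ρ σ ≤ bhat (outDist E ρ) (outDist E σ) := by
  obtain ⟨hS, hSS, -⟩ := matSqrt_spec hρ
  obtain ⟨hT, hTT, -⟩ := matSqrt_spec hσ
  unfold fid
  set S := matSqrt ρ
  set T := matSqrt σ
  have hM : S * σ * S = (T * S)ᴴ * (T * S) := by
    rw [Matrix.conjTranspose_mul, hS.1.eq, hT.1.eq, ← hTT]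
    simp only [Matrix.mul_assoc]
  rw [hM]
  obtain ⟨U, hU, hU1⟩ := polar (T * S)
  rw [← hU]
  have hsum : U * (T * S) = ∑ i, U * T * E i * S := by
    rw [← Finset.sum_mul, ← Finset.mul_sum, hE.2, Matrix.mul_one, Matrix.mul_assoc]
  rw [hsum, Matrix.trace_sum, Complex.re_sum]
  unfold bhat
  refine Finset.sum_le_sum fun i _ => ?_
  obtain ⟨hK, hKK, -⟩ := matSqrt_spec (hE.1 i)
  set K := matSqrt (E i)
  have cs := trace_cs (K * T * Uᴴ) (K * S)
  have e1 : (K * T * Uᴴ)ᴴ * (K * S) = U * T * E i * S := by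
    simp only [Matrix.conjTranspose_mul, Matrix.conjTranspose_conjTranspose, hK.1.eq, hT.1.eq,
      ← hKK, Matrix.mul_assoc]
  have e2 : ((K * S)ᴴ * (K * S)).trace = (E i * ρ).trace := by
    rw [Matrix.conjTranspose_mul, hK.1.eq, hS.1.eq, ← hKK, ← hSS, Matrix.mul_assoc,
      Matrix.trace_mul_comm]
    simp only [Matrix.mul_assoc]
  have e3 : ((K * T * Uᴴ)ᴴ * (K * T * Uᴴ)).trace.re ≤ ((E i * σ).trace).re := by
    have a1 : ((K * T * Uᴴ)ᴴ * (K * T * Uᴴ)).trace = ((Uᴴ * U) * (T * E i * T)).trace := by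
      simp only [Matrix.conjTranspose_mul, Matrix.conjTranspose_conjTranspose, hK.1.eq, hT.1.eq,
        ← hKK]
      rw [Matrix.mul_assoc Uᴴ U, Matrix.trace_mul_comm Uᴴ]
      simp only [Matrix.mul_assoc]
    have a2 : (E i * σ).trace = (T * E i * T).trace := by
      rw [← hTT, ← Matrix.mul_assoc, Matrix.trace_mul_comm, Matrix.mul_assoc]
    have hpsd := (hE.1 i).mul_mul_conjTranspose_same T
    rw [hT.1.eq] at hpsd
    have := re_trace_mul_nonneg hU1 hpsd
    rw [Matrix.sub_mul, Matrix.one_mul, Matrix.trace_sub, Complex.sub_re] at this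
    rw [a1, a2]
    linarith
  rw [e1, e2] at cs
  refine cs.trans ?_
  rw [mul_comm]
  unfold outDist
  exact mul_le_mul_of_nonneg_left (Real.sqrt_le_sqrt e3) (Real.sqrt_nonneg _)

lemma outDist_nonneg {n : ℕ} {E : Fin n → Matrix α α ℂ} (hE : IsPOVM E) {ρ : Matrix α α ℂ}
    (hρ : ρ.PosSemidef) (i : Fin n) : 0 ≤ outDist E ρ i :=
  re_trace_mul_nonneg (hE.1 i) hρ

lemma outDist_sum {n : ℕ} {E : Fin n → Matrix α α ℂ} (hE : IsPOVM E) {ρ : Matrix α α ℂ}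
    (hρ : IsDensity ρ) : ∑ i, outDist E ρ i = 1 := by
  unfold outDist
  rw [← Complex.re_sum, ← Matrix.trace_sum, ← Finset.sum_mul, hE.2, Matrix.one_mul, hρ.2]
  simp

lemma bhat_nonneg {n : ℕ} (p q : Fin n → ℝ) : 0 ≤ bhat p q :=
  Finset.sum_nonneg fun _ _ => mul_nonneg (Real.sqrt_nonneg _) (Real.sqrt_nonneg _)

lemma eq_of_bhat {n : ℕ} {p q : Fin n → ℝ} (hp : ∀ i, 0 ≤ p i) (hq : ∀ i, 0 ≤ q i)
    (hp1 : ∑ i, p i = 1) (hq1 : ∑ i, q i = 1) (h : 1 ≤ bhat p q) (i : Fin n) : p i = q i := by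
  have hs : ∑ i, (Real.sqrt (p i) - Real.sqrt (q i)) ^ 2 = 2 - 2 * bhat p q := by
    have : ∀ i, (Real.sqrt (p i) - Real.sqrt (q i)) ^ 2
        = p i + q i - 2 * (Real.sqrt (p i) * Real.sqrt (q i)) := by
      intro i
      have h1 := Real.sq_sqrt (hp i)
      have h2 := Real.sq_sqrt (hq i)
      linear_combination h1 + h2
    simp only [this, Finset.sum_sub_distrib, Finset.sum_add_distrib, hp1, hq1, ← Finset.mul_sum]
    unfold bhat
    ring
  have hle := Finset.single_le_sum (f := fun i => (Real.sqrt (p i) - Real.sqrt (q i)) ^ 2)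
    (fun i _ => sq_nonneg _) (Finset.mem_univ i)
  have h0 : (Real.sqrt (p i) - Real.sqrt (q i)) ^ 2 = 0 :=
    le_antisymm (by linarith) (sq_nonneg _)
  have h1 : Real.sqrt (p i) = Real.sqrt (q i) := sub_eq_zero.1 (pow_eq_zero_iff two_ne_zero |>.1 h0)
  exact (Real.sqrt_inj (hp i) (hq i)).1 h1

lemma re_trace_eq_of_density {X Y : Matrix α α ℂ}
    (h : ∀ ρ, IsDensity ρ → ((X * ρ).trace).re = ((Y * ρ).trace).re)
    {A : Matrix α α ℂ} (hA : A.PosSemidef) : ((X * A).trace).re = ((Y * A).trace).re := by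
  have ht := Complex.le_def.1 hA.trace_nonneg
  have htr : A.trace = ((A.trace.re : ℝ) : ℂ) := by
    apply Complex.ext
    · simp
    · simpa using ht.2.symm
  by_cases h0 : A.trace.re = 0
  · have : A = 0 := by
      rw [← hA.trace_eq_zero_iff, htr, h0]
      simp
    simp [this]
  · have hd : IsDensity (((A.trace.re)⁻¹ : ℝ) • A) := by
      refine ⟨hA.smul (inv_nonneg.2 ht.1), ?_⟩
      rw [Matrix.trace_smul]
      conv_lhs => rw [htr]
      rw [Complex.ofReal_re, Complex.real_smul, ← Complex.ofReal_mul, inv_mul_cancel₀ h0]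
      simp
    have := h _ hd
    rw [Matrix.mul_smul, Matrix.mul_smul, Matrix.trace_smul, Matrix.trace_smul,
      Complex.smul_re, Complex.smul_re, smul_eq_mul, smul_eq_mul] at this
    exact mul_left_cancel₀ (inv_ne_zero h0) this

lemma eq_of_density {X Y : Matrix α α ℂ} (hX : X.PosSemidef) (hY : Y.PosSemidef)
    (h : ∀ ρ, IsDensity ρ → ((X * ρ).trace).re = ((Y * ρ).trace).re) : X = Y := by
  have h1 := re_trace_eq_of_density h hX
  have h2 := re_trace_eq_of_density h hY
  have hH : (X - Y)ᴴ = X - Y := by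
    rw [Matrix.conjTranspose_sub, hX.1.eq, hY.1.eq]
  have hre : ((X - Y)ᴴ * (X - Y)).trace.re = 0 := by
    rw [hH, Matrix.mul_sub, Matrix.sub_mul, Matrix.sub_mul]
    simp only [Matrix.trace_sub, Complex.sub_re]
    linarith
  have him := (Complex.le_def.1
    (Matrix.posSemidef_conjTranspose_mul_self (X - Y)).trace_nonneg).2
  have h0 : ((X - Y)ᴴ * (X - Y)).trace = 0 := Complex.ext hre him.symm
  exact sub_eq_zero.1 (Matrix.trace_conjTranspose_mul_self_eq_zero_iff.1 h0)

end helpers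

/-- Property (B3): `B(E₁,E₂) = 1` iff `E₁ = E₂`. -/
theorem obsB_eq_one_iff {d n : ℕ} (hd : 1 ≤ d)
    (E₁ E₂ : Fin n → Matrix (Fin d) (Fin d) ℂ) (hE₁ : IsPOVM E₁) (hE₂ : IsPOVM E₂) :
    obsB E₁ E₂ = 1 ↔ ∀ i, E₁ i = E₂ i := by
  constructor
  · intro hB i
    refine eq_of_density (hE₁.1 i) (hE₂.1 i) fun ρ hρ => ?_
    have hf := fid_self hρ
    have hle : obsB E₁ E₂ ≤ bhat (outDist E₁ ρ) (outDist E₂ ρ) := by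
      refine csInf_le ⟨0, ?_⟩ ⟨ρ, ρ, hρ, hρ, by rw [hf]; exact one_ne_zero, by rw [hf, div_one]⟩
      rintro r ⟨ρ₁, ρ₂, h1, h2, -, rfl⟩
      exact div_nonneg (bhat_nonneg _ _) (fid_nonneg h1.1 h2.1)
    rw [hB] at hle
    exact eq_of_bhat (outDist_nonneg hE₁ hρ.1) (outDist_nonneg hE₂ hρ.1)
      (outDist_sum hE₁ hρ) (outDist_sum hE₂ hρ) hle i
  · intro h
    obtain rfl : E₁ = E₂ := funext h
    have hρ : ∃ ρ : Matrix (Fin d) (Fin d) ℂ, IsDensity ρ := by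
      refine ⟨Matrix.vecMulVec (Pi.single ⟨0, hd⟩ 1) (star (Pi.single ⟨0, hd⟩ 1)),
        Matrix.posSemidef_vecMulVec_self_star _, ?_⟩
      rw [Matrix.trace_vecMulVec]
      simp
    obtain ⟨ρ, hρ⟩ := hρ
    have hf := fid_self hρ
    refine IsLeast.csInf_eq ⟨⟨ρ, ρ, hρ, hρ, by rw [hf]; exact one_ne_zero, ?_⟩, ?_⟩
    · rw [hf, div_one, ← outDist_sum hE₁ hρ]
      unfold bhat
      exact Finset.sum_congr rfl fun i _ => (Real.mul_self_sqrt (outDist_nonneg hE₁ hρ.1 i)).symm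
    · rintro r ⟨ρ₁, ρ₂, h1, h2, h0, rfl⟩
      rw [le_div_iff₀ (lt_of_le_of_ne (fid_nonneg h1.1 h2.1) h0.symm), one_mul]
      exact fid_le_bhat hE₁ h1.1 h2.1
end QProg
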